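/- Let A be the polynomial ring over ℚ[ε] in the variables u^α_i for α ∈ {1,2,3} and i ∈ ℕ (write u^α := u^α_0), and let D : A → A be the unique ℚ[ε]-derivation with D(u^α_i) = u^α_{i+1}. Let G := (u¹)²u³/2 + u¹(u²)²/2 + (u²)²(u³)²/8 + (u³)⁵/320 + ε²( u¹u¹_2/8 + u³_2(u²)²/64 + u³u²u²_2/16 + u¹_2(u³)²/64 + (u³)³u³_2/192 ) + ε⁴( u²u²_4/160 + 5(u³)²u³_4/4096 + 3u¹u³_4/640 ) + ε⁶ u³u³_6/8192, and let H := w¹(w²)²/2 + (w¹)²w³/2 + (w²)²(w³)²/8 + (w³)⁵/320 + ε²( w¹w¹_2/8 + w¹w³w³_2/48 + w¹(w³_1)²/32 + w²w³w²_2/12 + w³(w²_1)²/48 + (w³)³w³_2/64 + (w³)²(w³_1)²/32 ) + ε⁴( w²w²_4/160 + w¹w³_4/480 + 5(w³)²w³_4/4608 ) + ε⁶ w³w³_6/11520, regarded as a polynomial in variables w^α_i. Let φ : A → A be the ℚ[ε]-algebra homomorphism obtained by substituting w^α_i := D^i(W^α) where W¹ := u¹ + (ε²/96)u³_2, W² :=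 u², W³ := u³. Then φ(H) − G lies in the image of D, i.e. there exists S ∈ A with φ(H) − G = D(S). -/

import Mathlib

/-!
The difference `φ(H) - G` is computed order by order in `ε` and integrated by parts, with
`a, b, c` standing for `u¹, u², u³`. The order `ε⁰` parts agree. At order `ε²` what remains is
`a (c²)ₓₓ - aₓₓ c²`, `c (b²)ₓₓ - cₓₓ b²` and `(c³ cₓ)ₓ` up to constants; at order `ε⁴` it is
`a₂ c₂ - a c₄` together with a cubic expression in `c` that integrates to a combination of
`c² c₃ - 2 c c₁ c₂` and `c₁³`; at order `ε⁶` it is a multiple of `c₂ c₄ - c c₆`. Each of these is a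
total derivative, which gives the explicit primitive `S4`. The identity `φ(H) - G = D S4` is then a
polynomial identity in the jet variables once `D` is evaluated by the Leibniz rule.
-/

noncomputable section

open MvPolynomial

/-- The ring of differential polynomials in `u¹, u², u³` over `ℚ[ε]`:
the polynomial ring over `ℚ[ε]` in the jet variables `u^α_i`, `α ∈ {1,2,3}`, `i ∈ ℕ`. -/
abbrev A3 : Type := MvPolynomial (Fin 3 × ℕ) (Polynomial ℚ)

/-- The jet variable `u^α_i` (indices `α = 0, 1, 2` standing for `u¹, u², u³`). -/
def jet (α : Fin 3) (i : ℕ) : A3 := X (α, i)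

/-- The element `ε` of `A3`. -/
def E : A3 := C Polynomial.X

/-- The density `G` of the Hamiltonian `ḡ_{1,1}` of the double ramification
hierarchy of the 4-spin theory (in the variables `u^α_i`). -/
def G4 : A3 :=
  (1/2 : ℚ) • (jet 0 0 ^ 2 * jet 2 0) + (1/2 : ℚ) • (jet 0 0 * jet 1 0 ^ 2)
  + (1/8 : ℚ) • (jet 1 0 ^ 2 * jet 2 0 ^ 2) + (1/320 : ℚ) • (jet 2 0 ^ 5)
  + E ^ 2 * ((1/8 : ℚ) • (jet 0 0 * jet 0 2) + (1/64 : ℚ) • (jet 2 2 * jet 1 0 ^ 2)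
      + (1/16 : ℚ) • (jet 2 0 * jet 1 0 * jet 1 2) + (1/64 : ℚ) • (jet 0 2 * jet 2 0 ^ 2)
      + (1/192 : ℚ) • (jet 2 0 ^ 3 * jet 2 2))
  + E ^ 4 * ((1/160 : ℚ) • (jet 1 0 * jet 1 4) + (5/4096 : ℚ) • (jet 2 0 ^ 2 * jet 2 4)
      + (3/640 : ℚ) • (jet 0 0 * jet 2 4))
  + E ^ 6 * ((1/8192 : ℚ) • (jet 2 0 * jet 2 6))

/-- The density `H` of the Hamiltonian `h̄_{1,1}` of the 4-spin Dubrovin–Zhang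
hierarchy, regarded as a polynomial in the variables `w^α_i` (here again realized
as the generators `X (α, i)` of the same ring `A3`). -/
def H4 : A3 :=
  (1/2 : ℚ) • (jet 0 0 * jet 1 0 ^ 2) + (1/2 : ℚ) • (jet 0 0 ^ 2 * jet 2 0)
  + (1/8 : ℚ) • (jet 1 0 ^ 2 * jet 2 0 ^ 2) + (1/320 : ℚ) • (jet 2 0 ^ 5)
  + E ^ 2 * ((1/8 : ℚ) • (jet 0 0 * jet 0 2) + (1/48 : ℚ) • (jet 0 0 * jet 2 0 * jet 2 2)
      + (1/32 : ℚ) • (jet 0 0 * jet 2 1 ^ 2) + (1/12 : ℚ) • (jet 1 0 * jet 2 0 * jet 1 2)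
      + (1/48 : ℚ) • (jet 2 0 * jet 1 1 ^ 2) + (1/64 : ℚ) • (jet 2 0 ^ 3 * jet 2 2)
      + (1/32 : ℚ) • (jet 2 0 ^ 2 * jet 2 1 ^ 2))
  + E ^ 4 * ((1/160 : ℚ) • (jet 1 0 * jet 1 4) + (1/480 : ℚ) • (jet 0 0 * jet 2 4)
      + (5/4608 : ℚ) • (jet 2 0 ^ 2 * jet 2 4))
  + E ^ 6 * ((1/11520 : ℚ) • (jet 2 0 * jet 2 6))

/-- The Miura transformation `w¹ = u¹ + (ε²/96) u³ₓₓ, w² = u², w³ = u³`. -/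
def W4 : Fin 3 → A3 :=
  ![jet 0 0 + (1/96 : ℚ) • (E ^ 2 * jet 2 2), jet 1 0, jet 2 0]

/-- An explicit primitive of `φ(H) - G`: one bracket for each power of `ε²`. -/
def S4 : A3 :=
  E ^ 2 * ((1/32 : ℚ) • (jet 0 0 * jet 2 0 * jet 2 1) - (1/64 : ℚ) • (jet 0 1 * jet 2 0 ^ 2)
      + (1/96 : ℚ) • (jet 2 0 ^ 3 * jet 2 1) + (1/48 : ℚ) • (jet 2 0 * jet 1 0 * jet 1 1)
      - (1/96 : ℚ) • (jet 2 1 * jet 1 0 ^ 2))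
  + E ^ 4 * ((1/768 : ℚ) • (jet 0 1 * jet 2 2 - jet 0 0 * jet 2 3)
      - (5/36864 : ℚ) • (jet 2 0 ^ 2 * jet 2 3 - (2 : ℚ) • (jet 2 0 * jet 2 1 * jet 2 2))
      + (1/55296 : ℚ) • jet 2 1 ^ 3)
  - E ^ 6 * ((13/368640 : ℚ) • (jet 2 0 * jet 2 5 - jet 2 1 * jet 2 4))

/-- The parameter `ε` is a scalar for `D`. -/
lemma derivation_E (D : Derivation (Polynomial ℚ) A3 A3) : D E = 0 :=
  D.map_algebraMap Polynomial.X

/-- `D` is linear over `ℚ`, not only over `ℚ[ε]`. -/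
lemma derivation_rat_smul (D : Derivation (Polynomial ℚ) A3 A3) (q : ℚ) (f : A3) :
    D (q • f) = q • D f :=
  D.map_smul_of_tower q f

/-- A `ℚ[ε]`-algebra homomorphism is linear over `ℚ`. -/
lemma aeval_rat_smul (f : Fin 3 × ℕ → A3) (q : ℚ) (p : A3) :
    aeval f (q • p) = q • aeval f p :=
  (aeval f).toLinearMap.map_smul_of_tower q p

/-- under the Miura transformation `w¹ = u¹ + (ε²/96)u³ₓₓ, w² = u²,
`w³ = u³` (with `w^α_i = D^i(W^α)`, `D` the total `x`-derivative), the DZ density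
`H` and the DR density `G` of the 4-spin theory differ by a total derivative. -/
theorem rspin4_DR_eq_DZ_g11
    (D : Derivation (Polynomial ℚ) A3 A3)
    (hD : ∀ (α : Fin 3) (i : ℕ), D (jet α i) = jet α (i + 1)) :
    ∃ S : A3, (aeval fun pr : Fin 3 × ℕ => (⇑D)^[pr.2] (W4 pr.1)) H4 - G4 = D S := by
  have iter : ∀ (α : Fin 3) (i : ℕ), (⇑D)^[i] (jet α 0) = jet α i := by
    intro α i
    induction i with
    | zero => rfl
    | succ n ih => rw [Function.iterate_succ_apply', ih, hD]
  set φ := aeval (R := Polynomial ℚ) fun pr : Fin 3 × ℕ => (⇑D)^[pr.2] (W4 pr.1) with hφ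
  have φE : φ E = E := φ.commutes Polynomial.X
  have φjet : ∀ α i, φ (jet α i) = (⇑D)^[i] (W4 α) := fun α i => by
    rw [hφ, jet, aeval_X]
  have φ1 : ∀ i, φ (jet 1 i) = jet 1 i := fun i => (φjet 1 i).trans (iter 1 i)
  have φ2 : ∀ i, φ (jet 2 i) = jet 2 i := fun i => (φjet 2 i).trans (iter 2 i)
  have φ00 : φ (jet 0 0) = jet 0 0 + (1/96 : ℚ) • (E ^ 2 * jet 2 2) := φjet 0 0
  have φ02 : φ (jet 0 2) = jet 0 2 + (1/96 : ℚ) • (E ^ 2 * jet 2 4) := by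
    rw [φjet]
    change D (D (jet 0 0 + (1/96 : ℚ) • (E ^ 2 * jet 2 2))) = _
    simp [derivation_E, hD]
  have φsmul : ∀ (q : ℚ) (p : A3), φ (q • p) = q • φ p := aeval_rat_smul _
  refine ⟨S4, ?_⟩
  simp only [H4, G4, S4, map_add, map_sub, map_mul, map_pow, φsmul, φE, φ1, φ2, φ00, φ02,
    derivation_rat_smul, Derivation.leibniz, Derivation.leibniz_pow, derivation_E, hD,
    smul_eq_mul]
  algebra
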